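/- Let A generate a contraction semigroup on a Banach space X and B ∈ C²_b(X,X) with ‖DB(U)‖ ≤ M′ and ‖D²B(U)‖ ≤ M″ on a ball of radius R. Writing e^{tJ(U)} for the semigroup generated by J(U) = A + DB(U), the map U ↦ e^{tJ(U)} is Fréchet differentiable on the R-ball and satisfies ‖D_U e^{tJ(U)}‖ ≤ M″ t e^{M′ t} for all t ≥ 0. -/

import Mathlib

/- Statement 11 (j = 1 case of Lemma 6.4): differentiability of `U ↦ e^{tJ(U)}` with
`J(U) = A + DB(U)`, and the bound `‖D_U e^{tJ(U)}‖ ≤ M'' t e^{M' t}`.  The semigroup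
`T U t = e^{tJ(U)}` is characterized by the variation-of-constants (Duhamel) formula
with respect to the contraction semigroup `S` generated by `A`; `B'` and `B''` are the
first and second Fréchet derivatives of the nonlinearity `B`. -/

open MeasureTheory Metric

/- For bounded perturbations `T₀`, `T₁` of `S` by `K₀`, `K₁`, subtracting the two Duhamel formulas
shows that `T₁ - T₀` solves the Volterra equation `z = S ∗ (K₀ z + (K₁ - K₀) T₁)`, whose only
solution is `T₀ ∗ (K₁ - K₀) T₁`. Hence `T₁ - T₀ = O(‖K₁ - K₀‖)`, and replacing `T₁` by `T₀` in the
convolution leaves the linear term `T₀ ∗ (K₁ - K₀) T₀` with an error `O(‖K₁ - K₀‖²)`. -/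

open Set Topology

section StronglyContinuous

variable {α X Y : Type*} [TopologicalSpace α]
  [NormedAddCommGroup X] [NormedSpace ℝ X] [CompleteSpace X]
  [NormedAddCommGroup Y] [NormedSpace ℝ Y] {F : α → X →L[ℝ] Y}

lemma exists_opNorm_le_of_isCompact {s : Set α} (hs : IsCompact s)
    (hF : ∀ x, ContinuousOn (fun a => F a x) s) : ∃ C, ∀ a ∈ s, ‖F a‖ ≤ C := by
  obtain ⟨C, hC⟩ := banach_steinhaus (g := fun a : s => F a) fun x =>
    (hs.exists_bound_of_continuousOn (hF x)).imp fun _ h a => h a a.2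
  exact ⟨C, fun a ha => hC ⟨a, ha⟩⟩

lemma continuous_uncurry_of_forall_continuous_apply [WeaklyLocallyCompactSpace α]
    (hF : ∀ x, Continuous fun a => F a x) : Continuous fun p : α × X => F p.1 p.2 := by
  rw [continuous_iff_continuousAt]
  rintro ⟨a₀, x₀⟩
  obtain ⟨s, hs, hsa⟩ := exists_compact_mem_nhds a₀
  obtain ⟨C, hC⟩ := exists_opNorm_le_of_isCompact hs fun x => (hF x).continuousOn
  have hlim : Filter.Tendsto (fun p : α × X => C * ‖p.2 - x₀‖ + ‖F p.1 x₀ - F a₀ x₀‖)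
      (𝓝 (a₀, x₀)) (𝓝 0) := by
    have hcont : Continuous fun p : α × X => C * ‖p.2 - x₀‖ + ‖F p.1 x₀ - F a₀ x₀‖ := by
      have := (hF x₀).comp (continuous_fst (Y := X))
      fun_prop
    simpa using hcont.tendsto (a₀, x₀)
  rw [ContinuousAt, tendsto_iff_norm_sub_tendsto_zero]
  refine squeeze_zero' (.of_forall fun _ => norm_nonneg _) ?_ hlim
  filter_upwards [continuous_fst.continuousAt.preimage_mem_nhds hsa] with p hp
  calc ‖F p.1 p.2 - F a₀ x₀‖ = ‖F p.1 (p.2 - x₀) + (F p.1 x₀ - F a₀ x₀)‖ := by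
        rw [map_sub, sub_add_sub_cancel]
    _ ≤ C * ‖p.2 - x₀‖ + ‖F p.1 x₀ - F a₀ x₀‖ :=
        norm_add_le_of_le ((F p.1).le_of_opNorm_le (hC _ hp) _) le_rfl

lemma continuous_strong_clm_apply [WeaklyLocallyCompactSpace α] {β : Type*} [TopologicalSpace β]
    {τ : β → α} {f : β → X} (hF : ∀ x, Continuous fun a => F a x) (hτ : Continuous τ)
    (hf : Continuous f) : Continuous fun b => F (τ b) (f b) :=
  (continuous_uncurry_of_forall_continuous_apply hF).comp (hτ.prodMk hf)

end StronglyContinuous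

lemma intervalIntegral_triangle_swap {E : Type*} [NormedAddCommGroup E] [NormedSpace ℝ E]
    {G : ℝ → ℝ → E} (hG : Continuous G.uncurry) {a b : ℝ} (hab : a ≤ b) :
    ∫ s in a..b, ∫ r in s..b, G r s = ∫ r in a..b, ∫ s in a..r, G r s := by
  set Δ : ℝ → ℝ → E := fun r s => (Ioi s).indicator (fun r => G r s) r
  have hΔ_int : IntegrableOn Δ.uncurry (uIoc a b ×ˢ uIoc a b) := by
    have hΔ : Δ.uncurry = {p : ℝ × ℝ | p.2 < p.1}.indicator G.uncurry := rfl
    rw [hΔ]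
    refine Integrable.indicator ?_ (measurableSet_lt measurable_snd measurable_fst)
    exact (hG.continuousOn.integrableOn_compact (isCompact_uIcc.prod isCompact_uIcc)).mono_set
      (prod_mono uIoc_subset_uIcc uIoc_subset_uIcc)
  have hr : ∀ s ∈ uIcc a b, ∫ r in s..b, G r s = ∫ r in a..b, Δ r s := fun s hs => by
    rw [uIcc_of_le hab] at hs
    rw [intervalIntegral.integral_of_le hs.2, intervalIntegral.integral_of_le hab,
      setIntegral_indicator measurableSet_Ioi, Ioc_inter_Ioi, sup_eq_right.2 hs.1]
  have hs : ∀ r ∈ uIcc a b, ∫ s in a..r, G r s = ∫ s in a..b, Δ r s := fun r hr => by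
    rw [uIcc_of_le hab] at hr
    have hΔr : Δ r = (Iio r).indicator (G r) := rfl
    rw [hΔr, intervalIntegral.integral_of_le hr.1, intervalIntegral.integral_of_le hab,
      setIntegral_indicator measurableSet_Iio, integral_Ioc_eq_integral_Ioo]
    congr 2
    ext s
    exact ⟨fun h => ⟨⟨h.1, h.2.le.trans hr.2⟩, h.2⟩, fun h => ⟨h.1.1, h.2⟩⟩
  rw [intervalIntegral.integral_congr hr, intervalIntegral.integral_congr hs]
  exact (intervalIntegral_intervalIntegral_swap hΔ_int).symm

/-- The convolution `(F ∗ f)(t) = ∫₀ᵗ F(t - s) f(s) ds` of an operator family with a function on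
the half-line. Families on `[0, ∞)` are encoded as functions on `ℝ`; for `0 ≤ t` only their values
at nonnegative times enter. -/
noncomputable def opConv {X Y : Type*} [NormedAddCommGroup X] [NormedSpace ℝ X]
    [NormedAddCommGroup Y] [NormedSpace ℝ Y] (F : ℝ → X →L[ℝ] Y) (f : ℝ → X) (t : ℝ) : Y :=
  ∫ s in (0 : ℝ)..t, F (t - s) (f s)

section OpConv

variable {X Y Z : Type*} [NormedAddCommGroup X] [NormedSpace ℝ X]
  [NormedAddCommGroup Y] [NormedSpace ℝ Y] [NormedAddCommGroup Z] [NormedSpace ℝ Z]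
  {F : ℝ → X →L[ℝ] Y} {f g : ℝ → X} {t : ℝ}

lemma opConv_congr_left {F' : ℝ → X →L[ℝ] Y} (h : EqOn F F' (Ici 0)) (ht : 0 ≤ t) :
    opConv F f t = opConv F' f t :=
  intervalIntegral.integral_congr fun s hs => by
    rw [uIcc_of_le ht] at hs
    simp only [h (sub_nonneg.2 hs.2)]

lemma opConv_smul (c : ℝ) : opConv F (fun s => c • f s) t = c • opConv F f t := by
  simp only [opConv, map_smul, intervalIntegral.integral_smul]

lemma norm_opConv_le_mul_integral {C : ℝ} (hF : ∀ s ∈ Icc 0 t, ‖F s‖ ≤ C) (hf : Continuous f)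
    (ht : 0 ≤ t) : ‖opConv F f t‖ ≤ C * ∫ s in (0 : ℝ)..t, ‖f s‖ := by
  rw [← intervalIntegral.integral_const_mul]
  refine intervalIntegral.norm_integral_le_of_norm_le ht (.of_forall fun s hs => ?_)
    ((hf.norm.const_mul C).intervalIntegrable _ _)
  exact (F _).le_of_opNorm_le (hF _ ⟨sub_nonneg.2 hs.2, sub_le_self _ hs.1.le⟩) _

lemma norm_opConv_le_of_le_exp {M C ω : ℝ}
    (hF : ∀ s, 0 ≤ s → ‖F s‖ ≤ M * Real.exp (ω * s))
    (hf : ∀ s ∈ Icc 0 t, ‖f s‖ ≤ C * Real.exp (ω * s)) (ht : 0 ≤ t) :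
    ‖opConv F f t‖ ≤ M * C * t * Real.exp (ω * t) := by
  have hpoint : ∀ s ∈ uIoc 0 t, ‖F (t - s) (f s)‖ ≤ M * C * Real.exp (ω * t) := fun s hs => by
    rw [uIoc_of_le ht] at hs
    calc ‖F (t - s) (f s)‖ ≤ M * Real.exp (ω * (t - s)) * (C * Real.exp (ω * s)) :=
          (F _).le_of_opNorm_le_of_le (hF _ (sub_nonneg.2 hs.2)) (hf s ⟨hs.1.le, hs.2⟩)
      _ = M * C * Real.exp (ω * (t - s) + ω * s) := by rw [Real.exp_add]; ring
      _ = M * C * Real.exp (ω * t) := by rw [← mul_add, sub_add_cancel]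
  calc ‖opConv F f t‖ ≤ M * C * Real.exp (ω * t) * |t - 0| :=
        intervalIntegral.norm_integral_le_of_norm_le_const hpoint
    _ = M * C * t * Real.exp (ω * t) := by rw [sub_zero, abs_of_nonneg ht]; ring

variable [CompleteSpace X]

lemma intervalIntegrable_opConv (hF : ∀ x, Continuous fun s => F s x) (hf : Continuous f)
    (a b : ℝ) : IntervalIntegrable (fun s => F (t - s) (f s)) volume a b :=
  (continuous_strong_clm_apply hF (continuous_const.sub continuous_id) hf).intervalIntegrable a b

lemma opConv_add (hF : ∀ x, Continuous fun s => F s x) (hf : Continuous f) (hg : Continuous g) :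
    opConv F (fun s => f s + g s) t = opConv F f t + opConv F g t := by
  simp only [opConv, map_add]
  exact intervalIntegral.integral_add (intervalIntegrable_opConv hF hf _ _)
    (intervalIntegrable_opConv hF hg _ _)

lemma opConv_sub (hF : ∀ x, Continuous fun s => F s x) (hf : Continuous f) (hg : Continuous g) :
    opConv F (fun s => f s - g s) t = opConv F f t - opConv F g t := by
  simp only [opConv, map_sub]
  exact intervalIntegral.integral_sub (intervalIntegrable_opConv hF hf _ _)
    (intervalIntegrable_opConv hF hg _ _)

lemma map_opConv [CompleteSpace Y] [CompleteSpace Z] (A : Y →L[ℝ] Z)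
    (hF : ∀ x, Continuous fun s => F s x) (hf : Continuous f) :
    A (opConv F f t) = opConv (fun s => A ∘L F s) f t :=
  (A.intervalIntegral_comp_comm (intervalIntegrable_opConv hF hf 0 t)).symm

lemma continuous_opConv {α : Type*} [TopologicalSpace α]
    {f : α → ℝ → X} {τ : α → ℝ}
    (hF : ∀ x, Continuous fun s => F s x) (hf : Continuous f.uncurry) (hτ : Continuous τ) :
    Continuous fun a => opConv F (f a) (τ a) := by
  refine intervalIntegral.continuous_parametric_intervalIntegral_of_continuous
    (f := fun a s => F (τ a - s) (f a s)) ?_ hτ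
  exact continuous_strong_clm_apply hF ((hτ.comp continuous_fst).sub continuous_snd) hf

lemma opConv_opConv [CompleteSpace Y] [CompleteSpace Z] {E : ℝ → Y →L[ℝ] Z}
    (hE : ∀ y, Continuous fun s => E s y) (hF : ∀ x, Continuous fun s => F s x)
    (hf : Continuous f) (ht : 0 ≤ t) :
    opConv E (opConv F f) t = ∫ s in (0 : ℝ)..t, opConv E (fun r => F r (f s)) (t - s) := by
  have hinner : ∀ r, E (t - r) (opConv F f r) = ∫ s in (0 : ℝ)..r, E (t - r) (F (r - s) (f s)) :=
    fun r => map_opConv (E (t - r)) hF hf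
  have hshift : ∀ s, opConv E (fun r => F r (f s)) (t - s)
      = ∫ r in s..t, E (t - r) (F (r - s) (f s)) := fun s => by
    have := intervalIntegral.integral_comp_sub_right (a := s) (b := t)
      (fun r => E (t - s - r) (F r (f s))) s
    simpa only [opConv, sub_sub_sub_cancel_right, sub_self] using this.symm
  have hcont : Continuous fun p : ℝ × ℝ => E (t - p.1) (F (p.1 - p.2) (f p.2)) :=
    continuous_strong_clm_apply hE (by fun_prop)
      (continuous_strong_clm_apply hF (by fun_prop) (by fun_prop))
  calc opConv E (opConv F f) t
      = ∫ r in (0 : ℝ)..t, ∫ s in (0 : ℝ)..r, E (t - r) (F (r - s) (f s)) := by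
        simp only [opConv.eq_def E, hinner]
    _ = ∫ s in (0 : ℝ)..t, ∫ r in s..t, E (t - r) (F (r - s) (f s)) :=
        (intervalIntegral_triangle_swap (G := fun r s => E (t - r) (F (r - s) (f s))) hcont ht).symm
    _ = ∫ s in (0 : ℝ)..t, opConv E (fun r => F r (f s)) (t - s) := by simp only [hshift]

lemma eq_zero_of_eq_opConv_self {F : ℝ → X →L[ℝ] X} (hF : ∀ x, Continuous fun s => F s x)
    {w : ℝ → X} (hw : Continuous w) (h : ∀ t, 0 ≤ t → w t = opConv F w t) (ht : 0 ≤ t) :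
    w t = 0 := by
  obtain ⟨C, hC⟩ := exists_opNorm_le_of_isCompact (isCompact_Icc (a := 0) (b := t))
    fun x => (hF x).continuousOn
  set φ : ℝ → ℝ := fun r => ∫ s in (0 : ℝ)..r, ‖w s‖
  have hφ_deriv : ∀ r, HasDerivAt φ ‖w r‖ r := fun r => hw.norm.integral_hasStrictDerivAt 0 r
    |>.hasDerivAt
  have hw_le : ∀ r ∈ Icc 0 t, ‖w r‖ ≤ C * ‖φ r‖ := fun r hr => by
    have hφ_nonneg : 0 ≤ φ r :=
      intervalIntegral.integral_nonneg hr.1 fun _ _ => norm_nonneg _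
    rw [h r hr.1, Real.norm_of_nonneg hφ_nonneg]
    exact norm_opConv_le_mul_integral (fun s hs => hC s ⟨hs.1, hs.2.trans hr.2⟩) hw hr.1
  have hφ_zero : φ t = 0 :=
    eq_zero_of_abs_deriv_le_mul_abs_self_of_eq_zero_right (f' := fun r => ‖w r‖) (K := C)
      (fun r _ => (hφ_deriv r).continuousAt.continuousWithinAt)
      (fun r _ => (hφ_deriv r).hasDerivWithinAt) intervalIntegral.integral_same
      (fun r hr => by simpa only [norm_norm] using hw_le r (Ico_subset_Icc_self hr))
      t (right_mem_Icc.2 ht)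
  simpa only [hφ_zero, norm_zero, mul_zero, norm_le_zero_iff] using hw_le t (right_mem_Icc.2 ht)

end OpConv

section Duhamel

variable {W X Y Z : Type*} [NormedAddCommGroup W] [NormedSpace ℝ W]
  [NormedAddCommGroup X] [NormedSpace ℝ X] [NormedAddCommGroup Y] [NormedSpace ℝ Y]
  [NormedAddCommGroup Z] [NormedSpace ℝ Z]
  {F : ℝ → Y →L[ℝ] Z} {G : ℝ → W →L[ℝ] X} {M N ω t : ℝ}

lemma norm_opConv_clm_apply_le (hF : ∀ s, 0 ≤ s → ‖F s‖ ≤ M * Real.exp (ω * s))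
    (hG : ∀ s, 0 ≤ s → ‖G s‖ ≤ N * Real.exp (ω * s)) (ht : 0 ≤ t) (Q : X →L[ℝ] Y) (x : W) :
    ‖opConv F (fun s => Q (G s x)) t‖ ≤ M * N * t * Real.exp (ω * t) * ‖Q‖ * ‖x‖ := by
  have hQ : ∀ s ∈ Icc 0 t, ‖Q (G s x)‖ ≤ ‖Q‖ * N * ‖x‖ * Real.exp (ω * s) := fun s hs =>
    (Q.le_opNorm_of_le ((G s).le_of_opNorm_le (hG s hs.1) x)).trans_eq (by ring)
  exact (norm_opConv_le_of_le_exp hF hQ ht).trans_eq (by ring)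

variable [CompleteSpace Y]

/-- The Duhamel operator `Q ↦ ∫₀ᵗ F(t - s) Q G(s) ds`. With `F(t) = G(t) = e^{tJ}` it is the
derivative of `e^{tJ}` with respect to `J` in the bounded direction `Q`. The exponential bounds on
`F` and `G` are parameters because they make the operator continuous. -/
noncomputable def duhamelOperator (hFc : ∀ y, Continuous fun s => F s y)
    (hGc : ∀ x, Continuous fun s => G s x) (hF : ∀ s, 0 ≤ s → ‖F s‖ ≤ M * Real.exp (ω * s))
    (hG : ∀ s, 0 ≤ s → ‖G s‖ ≤ N * Real.exp (ω * s)) (ht : 0 ≤ t) :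
    (X →L[ℝ] Y) →L[ℝ] W →L[ℝ] Z :=
  LinearMap.mkContinuous₂
    (LinearMap.mk₂ ℝ (fun Q x => opConv F (fun s => Q (G s x)) t)
      (fun Q Q' x => opConv_add hFc (Q.continuous.comp (hGc x)) (Q'.continuous.comp (hGc x)))
      (fun c _ _ => opConv_smul c)
      (fun Q x x' => by
        simpa only [map_add, Function.comp_apply] using
          opConv_add (f := fun s => Q (G s x)) (g := fun s => Q (G s x')) hFc
            (Q.continuous.comp (hGc x)) (Q.continuous.comp (hGc x')))
      (fun c _ _ => by simpa only [map_smul] using opConv_smul c))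
    (M * N * t * Real.exp (ω * t)) (norm_opConv_clm_apply_le hF hG ht)

lemma duhamelOperator_apply (hFc : ∀ y, Continuous fun s => F s y)
    (hGc : ∀ x, Continuous fun s => G s x) (hF : ∀ s, 0 ≤ s → ‖F s‖ ≤ M * Real.exp (ω * s))
    (hG : ∀ s, 0 ≤ s → ‖G s‖ ≤ N * Real.exp (ω * s)) (ht : 0 ≤ t) (Q : X →L[ℝ] Y) (x : W) :
    duhamelOperator hFc hGc hF hG ht Q x = opConv F (fun s => Q (G s x)) t :=
  rfl

lemma norm_duhamelOperator_le (hFc : ∀ y, Continuous fun s => F s y)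
    (hGc : ∀ x, Continuous fun s => G s x) (hF : ∀ s, 0 ≤ s → ‖F s‖ ≤ M * Real.exp (ω * s))
    (hG : ∀ s, 0 ≤ s → ‖G s‖ ≤ N * Real.exp (ω * s)) (ht : 0 ≤ t) :
    ‖duhamelOperator hFc hGc hF hG ht‖ ≤ M * N * t * Real.exp (ω * t) := by
  have hM : 0 ≤ M := by simpa using (norm_nonneg _).trans (hF 0 le_rfl)
  have hN : 0 ≤ N := by simpa using (norm_nonneg _).trans (hG 0 le_rfl)
  exact LinearMap.mkContinuous₂_norm_le _ (by positivity) _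

end Duhamel

/-- `T` is the strongly continuous family generated by `A + K`, where `A` is the generator of `S`:
it solves the variation-of-constants equation `T(t)x = S(t)x + ∫₀ᵗ S(t - s) K T(s)x ds`. Strong
continuity is asked for on all of `ℝ`, as a family on `[0, ∞)` can be extended by `T(max t 0)`. -/
structure IsBoundedPerturbation {X : Type*} [NormedAddCommGroup X] [NormedSpace ℝ X]
    (S : ℝ → X →L[ℝ] X) (K : X →L[ℝ] X) (T : ℝ → X →L[ℝ] X) : Prop where
  continuous_apply : ∀ x, Continuous fun t => T t x
  duhamel : ∀ t, 0 ≤ t → ∀ x, T t x = S t x + opConv S (fun s => K (T s x)) t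

namespace IsBoundedPerturbation

variable {X : Type*} [NormedAddCommGroup X] [NormedSpace ℝ X] {S T T₀ T₁ : ℝ → X →L[ℝ] X}
  {K K₀ K₁ : X →L[ℝ] X} {M ω t : ℝ}

lemma congr_left {S' : ℝ → X →L[ℝ] X} (hT : IsBoundedPerturbation S K T)
    (h : EqOn S S' (Ici 0)) : IsBoundedPerturbation S' K T where
  continuous_apply := hT.continuous_apply
  duhamel t ht x := by rw [hT.duhamel t ht x, h ht, opConv_congr_left h ht]

lemma tendsto_nhdsGE_zero (hT : IsBoundedPerturbation S K T) (hS0 : S 0 = 1)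
    (hS : ∀ b, ∃ C, ∀ t ∈ Icc 0 b, ‖S t‖ ≤ C) (x : X) :
    Filter.Tendsto (fun t => S t x) (𝓝[≥] 0) (𝓝 x) := by
  obtain ⟨C, hC⟩ := hS 1
  have hT0 : T 0 x = x := by simpa [hS0, opConv] using hT.duhamel 0 le_rfl x
  have hKT : Continuous fun s => K (T s x) := K.continuous.comp (hT.continuous_apply x)
  set η : ℝ → ℝ := fun t => ‖T t x - x‖ + C * ∫ s in (0 : ℝ)..t, ‖K (T s x)‖
  have hη : Filter.Tendsto η (𝓝[≥] 0) (𝓝 0) := by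
    have hη_cont : Continuous η :=
      ((hT.continuous_apply x).sub continuous_const).norm.add <| continuous_const.mul <|
        intervalIntegral.continuous_primitive (fun _ _ => hKT.norm.intervalIntegrable _ _) 0
    simpa [η, hT0] using (hη_cont.tendsto 0).mono_left nhdsWithin_le_nhds
  rw [tendsto_iff_norm_sub_tendsto_zero]
  refine squeeze_zero' (.of_forall fun _ => norm_nonneg _) ?_ hη
  filter_upwards [Icc_mem_nhdsGE one_pos] with t ht
  calc ‖S t x - x‖ = ‖(T t x - x) - opConv S (fun s => K (T s x)) t‖ := by
        rw [hT.duhamel t ht.1 x, add_sub_right_comm, add_sub_cancel_right]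
    _ ≤ η t := norm_sub_le_of_le le_rfl
        (norm_opConv_le_mul_integral (fun s hs => hC s ⟨hs.1, hs.2.trans ht.2⟩) hKT ht.1)

variable [CompleteSpace X]

lemma opConv_eq_opConv_add (hT : IsBoundedPerturbation S K T)
    (hS : ∀ x, Continuous fun t => S t x) {f : ℝ → X} (hf : Continuous f) (ht : 0 ≤ t) :
    opConv T f t = opConv S (fun s => K (opConv T f s) + f s) t := by
  have hKT : ∀ x, Continuous fun s => (K ∘L T s) x := fun x =>
    K.continuous.comp (hT.continuous_apply x)
  have hTf : Continuous (opConv T f) :=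
    continuous_opConv (f := fun _ => f) hT.continuous_apply (hf.comp continuous_snd) continuous_id
  have hconv : Continuous fun s => opConv S (fun r => (K ∘L T r) (f s)) (t - s) :=
    continuous_opConv (f := fun s r => (K ∘L T r) (f s)) hS
      (continuous_strong_clm_apply (F := fun r => K ∘L T r) hKT continuous_snd
        (hf.comp continuous_fst)) (by fun_prop)
  calc opConv T f t
      = ∫ s in (0 : ℝ)..t, (S (t - s) (f s) + opConv S (fun r => (K ∘L T r) (f s)) (t - s)) :=
        intervalIntegral.integral_congr fun s hs => by
          rw [uIcc_of_le ht] at hs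
          exact hT.duhamel (t - s) (sub_nonneg.2 hs.2) (f s)
    _ = opConv S f t + opConv S (opConv (fun r => K ∘L T r) f) t := by
        rw [intervalIntegral.integral_add (intervalIntegrable_opConv hS hf _ _)
          (hconv.intervalIntegrable _ _), opConv_opConv hS hKT hf ht, opConv.eq_def S]
    _ = opConv S (fun s => K (opConv T f s)) t + opConv S f t := by
        rw [add_comm]
        simp only [map_opConv K hT.continuous_apply hf]
    _ = opConv S (fun s => K (opConv T f s) + f s) t :=
        (opConv_add hS (K.continuous.comp hTf) hf).symm

lemma eq_opConv (hT : IsBoundedPerturbation S K T) (hS : ∀ x, Continuous fun t => S t x)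
    {f z : ℝ → X} (hf : Continuous f) (hz : Continuous z)
    (h : ∀ t, 0 ≤ t → z t = opConv S (fun s => K (z s) + f s) t) (ht : 0 ≤ t) :
    z t = opConv T f t := by
  set y : ℝ → X := opConv T f
  have hy : Continuous y :=
    continuous_opConv (f := fun _ => f) hT.continuous_apply (hf.comp continuous_snd) continuous_id
  have hSK : ∀ x, Continuous fun s => (S s ∘L K) x := fun x => hS (K x)
  refine sub_eq_zero.1 (eq_zero_of_eq_opConv_self hSK (hz.sub hy) (fun t ht => ?_) ht)
  have hKz : Continuous fun s => K (z s) + f s := (K.continuous.comp hz).add hf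
  have hKy : Continuous fun s => K (y s) + f s := (K.continuous.comp hy).add hf
  calc z t - y t = opConv S (fun s => (K (z s) + f s) - (K (y s) + f s)) t := by
        rw [opConv_sub hS hKz hKy, ← h t ht, ← hT.opConv_eq_opConv_add hS hf ht]
    _ = opConv (fun s => S s ∘L K) (fun s => z s - y s) t := by
        simp only [opConv, add_sub_add_right_eq_sub, ← map_sub, ContinuousLinearMap.comp_apply]

lemma sub_apply_eq_opConv (hT₀ : IsBoundedPerturbation S K₀ T₀)
    (hT₁ : IsBoundedPerturbation S K₁ T₁) (hS : ∀ x, Continuous fun t => S t x) (ht : 0 ≤ t)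
    (x : X) : T₁ t x - T₀ t x = opConv T₀ (fun s => (K₁ - K₀) (T₁ s x)) t := by
  have hc₀ := hT₀.continuous_apply x
  have hc₁ := hT₁.continuous_apply x
  refine hT₀.eq_opConv hS (z := fun t => T₁ t x - T₀ t x) ((K₁ - K₀).continuous.comp hc₁)
    (hc₁.sub hc₀) (fun t ht => ?_) ht
  calc T₁ t x - T₀ t x
      = opConv S (fun s => K₁ (T₁ s x)) t - opConv S (fun s => K₀ (T₀ s x)) t := by
        rw [hT₁.duhamel t ht x, hT₀.duhamel t ht x, add_sub_add_left_eq_sub]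
    _ = opConv S (fun s => K₁ (T₁ s x) - K₀ (T₀ s x)) t :=
        (opConv_sub hS (K₁.continuous.comp hc₁) (K₀.continuous.comp hc₀)).symm
    _ = opConv S (fun s => K₀ (T₁ s x - T₀ s x) + (K₁ - K₀) (T₁ s x)) t := by
        congr 1 with s
        simp only [map_sub, sub_apply]
        abel

lemma norm_sub_le (hT₀ : IsBoundedPerturbation S K₀ T₀) (hT₁ : IsBoundedPerturbation S K₁ T₁)
    (hS : ∀ x, Continuous fun t => S t x)
    (hb₀ : ∀ s, 0 ≤ s → ‖T₀ s‖ ≤ M * Real.exp (ω * s))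
    (hb₁ : ∀ s, 0 ≤ s → ‖T₁ s‖ ≤ M * Real.exp (ω * s)) (ht : 0 ≤ t) :
    ‖T₁ t - T₀ t‖ ≤ M * M * t * Real.exp (ω * t) * ‖K₁ - K₀‖ := by
  have hM : 0 ≤ M := by simpa using (norm_nonneg _).trans (hb₀ 0 le_rfl)
  refine ContinuousLinearMap.opNorm_le_bound _ (by positivity) fun x => ?_
  rw [sub_apply, hT₀.sub_apply_eq_opConv hT₁ hS ht]
  exact norm_opConv_clm_apply_le hb₀ hb₁ ht (K₁ - K₀) x

lemma norm_sub_sub_duhamelOperator_le (hT₀ : IsBoundedPerturbation S K₀ T₀)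
    (hT₁ : IsBoundedPerturbation S K₁ T₁) (hS : ∀ x, Continuous fun t => S t x)
    (hb₀ : ∀ s, 0 ≤ s → ‖T₀ s‖ ≤ M * Real.exp (ω * s))
    (hb₁ : ∀ s, 0 ≤ s → ‖T₁ s‖ ≤ M * Real.exp (ω * s)) (ht : 0 ≤ t) :
    ‖T₁ t - T₀ t - duhamelOperator hT₀.continuous_apply hT₀.continuous_apply hb₀ hb₀ ht (K₁ - K₀)‖
      ≤ M ^ 3 * t ^ 2 * Real.exp (ω * t) * ‖K₁ - K₀‖ ^ 2 := by
  have hM : 0 ≤ M := by simpa using (norm_nonneg _).trans (hb₀ 0 le_rfl)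
  set Q := K₁ - K₀
  refine ContinuousLinearMap.opNorm_le_bound _ (by positivity) fun x => ?_
  have hQ₀ : Continuous fun s => Q (T₀ s x) := Q.continuous.comp (hT₀.continuous_apply x)
  have hQ₁ : Continuous fun s => Q (T₁ s x) := Q.continuous.comp (hT₁.continuous_apply x)
  have hremainder : (T₁ t - T₀ t
      - duhamelOperator hT₀.continuous_apply hT₀.continuous_apply hb₀ hb₀ ht Q) x
      = opConv T₀ (fun s => Q (T₁ s x) - Q (T₀ s x)) t := by
    rw [sub_apply, sub_apply, hT₀.sub_apply_eq_opConv hT₁ hS ht,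
      duhamelOperator_apply, opConv_sub hT₀.continuous_apply hQ₁ hQ₀]
  have hbound : ∀ s ∈ Icc 0 t,
      ‖Q (T₁ s x) - Q (T₀ s x)‖ ≤ M ^ 2 * t * ‖Q‖ ^ 2 * ‖x‖ * Real.exp (ω * s) := fun s hs => by
    calc ‖Q (T₁ s x) - Q (T₀ s x)‖ = ‖Q ((T₁ s - T₀ s) x)‖ := by
            rw [← map_sub Q, sub_apply (T₁ s)]
      _ ≤ ‖Q‖ * (M * M * s * Real.exp (ω * s) * ‖Q‖ * ‖x‖) :=
          Q.le_opNorm_of_le (ContinuousLinearMap.le_of_opNorm_le _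
            (hT₀.norm_sub_le hT₁ hS hb₀ hb₁ hs.1) x)
      _ ≤ ‖Q‖ * (M * M * t * Real.exp (ω * s) * ‖Q‖ * ‖x‖) := by gcongr; exact hs.2
      _ = M ^ 2 * t * ‖Q‖ ^ 2 * ‖x‖ * Real.exp (ω * s) := by ring
  rw [hremainder]
  exact (norm_opConv_le_of_le_exp hb₀ hbound ht).trans_eq (by ring)

end IsBoundedPerturbation

lemma continuous_apply_max_of_tendsto {X : Type*} [NormedAddCommGroup X] [NormedSpace ℝ X]
    {S : ℝ → X →L[ℝ] X} (hS : ∀ b, ∃ C, ∀ t ∈ Icc 0 b, ‖S t‖ ≤ C)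
    (hS_add : ∀ s t, 0 ≤ s → 0 ≤ t → S (s + t) = S s ∘L S t) {x : X}
    (hx : Filter.Tendsto (fun t => S t x) (𝓝[≥] 0) (𝓝 x)) :
    Continuous fun t => S (max t 0) x := by
  have hle : ∀ a b, 0 ≤ a → a ≤ b → ‖S b x - S a x‖ ≤ ‖S a‖ * ‖S |b - a| x - x‖ := by
    intro a b ha hab
    have hba := sub_nonneg.2 hab
    have hadd := hS_add a (b - a) ha hba
    rw [add_sub_cancel] at hadd
    rw [abs_of_nonneg hba, hadd, ContinuousLinearMap.comp_apply, ← map_sub]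
    exact (S a).le_opNorm _
  rw [continuous_iff_continuousAt]
  intro a
  obtain ⟨C, hC⟩ := hS (max a 0)
  have hle_C : ∀ b, 0 ≤ b → ‖S b x - S (max a 0) x‖ ≤ C * ‖S |b - max a 0| x - x‖ := by
    intro b hb
    rcases le_total (max a 0) b with hab | hba
    · exact (hle _ b (le_max_right _ _) hab).trans
        (mul_le_mul_of_nonneg_right (hC _ ⟨le_max_right _ _, le_rfl⟩) (norm_nonneg _))
    · rw [norm_sub_rev, abs_sub_comm]
      exact (hle b _ hb hba).trans (mul_le_mul_of_nonneg_right (hC b ⟨hb, hba⟩) (norm_nonneg _))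
  have hdist : Filter.Tendsto (fun b : ℝ => |max b 0 - max a 0|) (𝓝 a) (𝓝[≥] 0) := by
    refine tendsto_nhdsWithin_iff.2 ⟨?_, .of_forall fun _ => mem_Ici.2 (abs_nonneg _)⟩
    have hcont : Continuous fun b : ℝ => |max b 0 - max a 0| := by fun_prop
    simpa using hcont.tendsto a
  have hlim := ((tendsto_iff_norm_sub_tendsto_zero.1 hx).comp hdist).const_mul C
  rw [mul_zero] at hlim
  rw [ContinuousAt, tendsto_iff_norm_sub_tendsto_zero]
  exact squeeze_zero (fun _ => norm_nonneg _) (fun b => hle_C _ (le_max_right _ _)) hlim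

lemma hasFDerivWithinAt_of_norm_sub_sub_le_sq {P E Q : Type*}
    [NormedAddCommGroup P] [NormedSpace ℝ P] [NormedAddCommGroup E] [NormedSpace ℝ E]
    [NormedAddCommGroup Q] [NormedSpace ℝ Q] {K : P → Q} {K' : P →L[ℝ] Q} {f : P → E}
    {L : Q →L[ℝ] E} {D : Set P} {U : P} {C : ℝ} (hK : HasFDerivWithinAt K K' D U) (hU : U ∈ D)
    (h : ∀ V ∈ D, ‖f V - f U - L (K V - K U)‖ ≤ C * ‖K V - K U‖ ^ 2) :
    HasFDerivWithinAt f (L ∘L K') D U := by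
  have hrem : HasFDerivWithinAt (fun V => f V - f U - L (K V - K U)) (0 : P →L[ℝ] E) D U := by
    refine Asymptotics.IsBigO.hasFDerivWithinAt (n := 2) ?_ hU one_lt_two
    refine Asymptotics.IsBigO.trans (.of_bound C ?_) (hK.isBigO_sub.norm_norm.pow 2)
    filter_upwards [self_mem_nhdsWithin] with V hV
    simpa using h V hV
  have hlin : HasFDerivWithinAt (fun V => L (K V - K U)) (L ∘L K') D U :=
    L.hasFDerivAt.comp_hasFDerivWithinAt U (hK.sub_const (K U))
  have hsum : HasFDerivWithinAt
      (fun V => f V - f U - L (K V - K U) + L (K V - K U) + f U) (0 + L ∘L K') D U :=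
    (hrem.add hlin).add_const (f U)
  simpa only [sub_add_cancel, zero_add] using hsum

section Family

variable {P X : Type*} [NormedAddCommGroup P] [NormedSpace ℝ P]
  [NormedAddCommGroup X] [NormedSpace ℝ X] [CompleteSpace X]
  {S : ℝ → X →L[ℝ] X} {K : P → X →L[ℝ] X} {K' : P →L[ℝ] X →L[ℝ] X}
  {T : P → ℝ → X →L[ℝ] X} {D : Set P} {U : P} {M ω t : ℝ}

lemma IsBoundedPerturbation.hasFDerivWithinAt (hS : ∀ x, Continuous fun s => S s x)
    (hT : ∀ V ∈ D, IsBoundedPerturbation S (K V) (T V))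
    (hTgrow : ∀ V ∈ D, ∀ s, 0 ≤ s → ‖T V s‖ ≤ M * Real.exp (ω * s))
    (hU : U ∈ D) (hK : HasFDerivWithinAt K K' D U) (ht : 0 ≤ t) :
    HasFDerivWithinAt (fun V => T V t)
      (duhamelOperator (hT U hU).continuous_apply (hT U hU).continuous_apply
        (hTgrow U hU) (hTgrow U hU) ht ∘L K') D U :=
  hasFDerivWithinAt_of_norm_sub_sub_le_sq hK hU fun V hV =>
    (hT U hU).norm_sub_sub_duhamelOperator_le (hT V hV) hS (hTgrow U hU) (hTgrow V hV) ht

theorem stmt11_general {C : ℝ} (hS0 : S 0 = 1) (hSbd : ∀ b, ∃ N, ∀ s ∈ Icc 0 b, ‖S s‖ ≤ N)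
    (hSsg : ∀ r s, 0 ≤ r → 0 ≤ s → S (r + s) = S r ∘L S s)
    (hT : ∀ V ∈ D, IsBoundedPerturbation S (K V) (T V))
    (hTgrow : ∀ V ∈ D, ∀ s, 0 ≤ s → ‖T V s‖ ≤ M * Real.exp (ω * s))
    (hU : U ∈ D) (hK : HasFDerivWithinAt K K' D U) (hK' : ‖K'‖ ≤ C) (ht : 0 ≤ t) :
    ∃ L : P →L[ℝ] X →L[ℝ] X, HasFDerivWithinAt (fun V => T V t) L D U
      ∧ ‖L‖ ≤ M ^ 2 * C * t * Real.exp (ω * t) := by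
  have hS : ∀ x, Continuous fun s => S (max s 0) x := fun x =>
    continuous_apply_max_of_tendsto hSbd hSsg ((hT U hU).tendsto_nhdsGE_zero hS0 hSbd x)
  have hT' : ∀ V ∈ D, IsBoundedPerturbation (fun s => S (max s 0)) (K V) (T V) := fun V hV =>
    (hT V hV).congr_left fun s hs => by rw [max_eq_left hs]
  refine ⟨_, IsBoundedPerturbation.hasFDerivWithinAt hS hT' hTgrow hU hK ht, ?_⟩
  have hTU := (hT U hU).continuous_apply
  have hbound := norm_duhamelOperator_le (X := X) (Y := X) hTU hTU (hTgrow U hU) (hTgrow U hU) ht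
  have hM : 0 ≤ M := by simpa using (norm_nonneg _).trans (hTgrow U hU 0 le_rfl)
  refine (ContinuousLinearMap.opNorm_comp_le _ K').trans ?_
  calc _ ≤ M * M * t * Real.exp (ω * t) * C := by gcongr
    _ = M ^ 2 * C * t * Real.exp (ω * t) := by ring

end Family

theorem stmt11 {X : Type*} [NormedAddCommGroup X] [NormedSpace ℝ X] [CompleteSpace X]
    (S : ℝ → X →L[ℝ] X) (B : X → X) (B' : X → X →L[ℝ] X)
    (B'' : X → X →L[ℝ] (X →L[ℝ] X))
    (T : X → ℝ → X →L[ℝ] X) (R M' M'' : ℝ)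
    (hR : 0 < R) (hM' : 0 ≤ M') (hM'' : 0 ≤ M'')
    (hS0 : S 0 = 1)
    (hScontr : ∀ t : ℝ, 0 ≤ t → ‖S t‖ ≤ 1)
    (hSsg : ∀ s t : ℝ, 0 ≤ s → 0 ≤ t → S (s + t) = (S s).comp (S t))
    (hB' : ∀ U : X, HasFDerivAt B (B' U) U)
    (hB'bd : ∀ U ∈ closedBall (0 : X) R, ‖B' U‖ ≤ M')
    (hB'' : ∀ U ∈ closedBall (0 : X) R, HasFDerivAt B' (B'' U) U)
    (hB''bd : ∀ U ∈ closedBall (0 : X) R, ‖B'' U‖ ≤ M'')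
    (hTgrow : ∀ U ∈ closedBall (0 : X) R, ∀ t : ℝ, 0 ≤ t → ‖T U t‖ ≤ Real.exp (M' * t))
    (hDuh : ∀ U ∈ closedBall (0 : X) R, ∀ t : ℝ, 0 ≤ t → ∀ x : X,
      T U t x = S t x + ∫ s in (0 : ℝ)..t, S (t - s) (B' U (T U s x)))
    (hTcont : ∀ U ∈ closedBall (0 : X) R, ∀ x : X, Continuous fun s => T U s x) :
    ∀ t : ℝ, 0 ≤ t → ∀ U ∈ closedBall (0 : X) R,
      ∃ L : X →L[ℝ] (X →L[ℝ] X),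
        HasFDerivWithinAt (fun V => T V t) L (closedBall (0 : X) R) U
        ∧ ‖L‖ ≤ M'' * t * Real.exp (M' * t) := by
  intro t ht U hU
  simpa using stmt11_general (M := 1) hS0 (fun _ => ⟨1, fun s hs => hScontr s hs.1⟩) hSsg
    (fun V hV => ⟨hTcont V hV, hDuh V hV⟩) (by simpa using hTgrow) hU
    (hB'' U hU).hasFDerivWithinAt (hB''bd U hU) ht
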